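/- Let F be a finite field, n m₁ m₂ : ℕ, and H₁ : Matrix (Fin m₁) (Fin n) F, H₂ : Matrix (Fin m₂) (Fin n) F parity check matrices of linear codes C₁ = ker H₁ and C₂ = ker H₂. Fix δ : ℝ and L : ℕ, and suppose both C₁ and C₂ are (δ, L) list-decodable from erasures (for every T : Finset (Fin n) with (1 − δ) * n ≤ T.card and every y : Fin n → F, at most L codewords of Cᵢ agree with y on T, for i = 1, 2). Then for every T : Finset (Fin n) with (1 − δ) * n ≤ T.card and every pair of syndromes s₁ : Fin m₁ → F, s₂ : Fin m₂ → F, the set of pairs {(a, b) : (Fin n → F) × (Fin n → F) | (∀ i ∈ T, a i = 0) ∧ (∀ i ∈ T, b i = 0) ∧ H₁.mulVec a = s₁ ∧ H₂.mulVec b = s₂} has at most L^2 elements. (This is the classical content of the paper's claim that the CSS code built from two (δ, L) erasure list-decodable linear codes is (δ, L²) erasure list-decodable: at most L² pairs of X- and Z-errors supported off T match any pair of syndromes.) -/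

import Mathlib

section SyndromeFiber

variable {R ι κ : Type*} [NonUnitalNonAssocRing R] [Fintype ι]

/-- The error vectors supported off `T` whose syndrome under the parity check matrix `H` is `s`.
For `s = 0` these are the codewords of `ker H` that agree with the zero word on `T`. -/
def syndromeFiber (H : Matrix κ ι R) (T : Set ι) (s : κ → R) : Set (ι → R) :=
  {a | H.mulVec a = s ∧ ∀ i ∈ T, a i = 0}

theorem sub_mem_syndromeFiber {H : Matrix κ ι R} {T : Set ι} {s t : κ → R} {a b : ι → R}
    (ha : a ∈ syndromeFiber H T s) (hb : b ∈ syndromeFiber H T t) :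
    a - b ∈ syndromeFiber H T (s - t) :=
  ⟨by rw [Matrix.mulVec_sub, ha.1, hb.1],
    fun i hi ↦ by rw [Pi.sub_apply, ha.2 i hi, hb.2 i hi, sub_zero]⟩

theorem encard_syndromeFiber_le (H : Matrix κ ι R) (T : Set ι) (s : κ → R) :
    (syndromeFiber H T s).encard ≤ (syndromeFiber H T 0).encard := by
  obtain hempty | ⟨a₀, ha₀⟩ := (syndromeFiber H T s).eq_empty_or_nonempty
  · simp [hempty]
  · have hmaps : Set.MapsTo (· - a₀) (syndromeFiber H T s) (syndromeFiber H T 0) :=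
      fun a ha ↦ sub_self s ▸ sub_mem_syndromeFiber ha ha₀
    exact Set.encard_le_encard_of_injOn hmaps sub_left_injective.injOn

end SyndromeFiber

theorem css_erasure_list_decoding_general {R ι κ₁ κ₂ : Type*} [NonUnitalNonAssocRing R]
    [Fintype ι] {H₁ : Matrix κ₁ ι R} {H₂ : Matrix κ₂ ι R} {T : Set ι} {L₁ L₂ : ℕ∞}
    (h₁ : (syndromeFiber H₁ T 0).encard ≤ L₁) (h₂ : (syndromeFiber H₂ T 0).encard ≤ L₂)
    (s₁ : κ₁ → R) (s₂ : κ₂ → R) :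
    {ab : (ι → R) × (ι → R) |
      (∀ i ∈ T, ab.1 i = 0) ∧ (∀ i ∈ T, ab.2 i = 0) ∧
      H₁.mulVec ab.1 = s₁ ∧ H₂.mulVec ab.2 = s₂}.encard ≤ L₁ * L₂ :=
  calc
    _ = (syndromeFiber H₁ T s₁ ×ˢ syndromeFiber H₂ T s₂).encard := by
      congr 1
      ext ab
      exact ⟨fun ⟨ha, hb, hs₁, hs₂⟩ ↦ ⟨⟨hs₁, ha⟩, hs₂, hb⟩,
        fun ⟨⟨hs₁, ha⟩, hs₂, hb⟩ ↦ ⟨ha, hb, hs₁, hs₂⟩⟩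
    _ = (syndromeFiber H₁ T s₁).encard * (syndromeFiber H₂ T s₂).encard := Set.encard_prod
    _ ≤ L₁ * L₂ := mul_le_mul' ((encard_syndromeFiber_le H₁ T s₁).trans h₁)
      ((encard_syndromeFiber_le H₂ T s₂).trans h₂)

/-- CSS erasure list-decoding: if the linear codes `C₁ = ker H₁` and `C₂ = ker H₂` are both
`(δ, L)` list-decodable from erasures, then for every subset `T` of at least `(1 − δ)·n`
coordinates and every pair of syndromes, at most `L²` pairs of error vectors supported off
`T` match the pair of syndromes. -/
theorem css_erasure_list_decoding
    {F : Type*} [Field F] [Fintype F] (n m₁ m₂ : ℕ)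
    (H₁ : Matrix (Fin m₁) (Fin n) F) (H₂ : Matrix (Fin m₂) (Fin n) F) (δ : ℝ) (L : ℕ)
    (hLDE₁ : ∀ T : Finset (Fin n), (1 - δ) * n ≤ T.card → ∀ y : Fin n → F,
      {c : Fin n → F | H₁.mulVec c = 0 ∧ ∀ i ∈ T, c i = y i}.ncard ≤ L)
    (hLDE₂ : ∀ T : Finset (Fin n), (1 - δ) * n ≤ T.card → ∀ y : Fin n → F,
      {c : Fin n → F | H₂.mulVec c = 0 ∧ ∀ i ∈ T, c i = y i}.ncard ≤ L) :
    ∀ T : Finset (Fin n), (1 - δ) * n ≤ T.card → ∀ s₁ : Fin m₁ → F, ∀ s₂ : Fin m₂ → F,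
      {ab : (Fin n → F) × (Fin n → F) |
        (∀ i ∈ T, ab.1 i = 0) ∧ (∀ i ∈ T, ab.2 i = 0) ∧
        H₁.mulVec ab.1 = s₁ ∧ H₂.mulVec ab.2 = s₂}.ncard ≤ L ^ 2 := by
  intro T hT s₁ s₂
  have h₁ : (syndromeFiber H₁ T 0).encard ≤ L :=
    Set.encard_le_coe_iff_finite_ncard_le.2 ⟨Set.toFinite _, hLDE₁ T hT 0⟩
  have h₂ : (syndromeFiber H₂ T 0).encard ≤ L :=
    Set.encard_le_coe_iff_finite_ncard_le.2 ⟨Set.toFinite _, hLDE₂ T hT 0⟩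
  have h := css_erasure_list_decoding_general h₁ h₂ s₁ s₂
  exact (Set.encard_le_coe_iff_finite_ncard_le.1 (by rwa [sq, Nat.cast_mul])).2
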